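/- Let d ≥ 1, D := {1,...,d}, let B ⊆ D with |B| > 1 and B' := D \ B, and define h : I^d → ℝ by h(x) := ∏_{i∈B} D_{2^{2n+1}}(x_i). There exist constants c_1, c_2 > 0 depending only on d such that for every n ≥ m_0, mes{x ∈ I^d : |(L_{p_n(B)}∘R_{p_n(B')})(h; x)| ≥ c_1 · 2^{n(2|B|−1)}} ≥ c_2 · n^{|B|−1} / 2^{n(2|B|−1)}, where p_n(B) denotes the index vector all of whose coordinates equal p_n. -/

import Mathlib

open MeasureTheory Filter

noncomputable section

/-- The unit cube `[0,1)^d`. -/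
def unitCube (d : ℕ) : Set (Fin d → ℝ) := Set.univ.pi fun _ => Set.Ico (0:ℝ) 1

/-- Lebesgue measure restricted to the unit cube `[0,1)^d`. -/
def cubeMeasure (d : ℕ) : Measure (Fin d → ℝ) := volume.restrict (unitCube d)

/-- The `1`-periodic function equal to `1` on `[0,1/2)` and to `-1` on `[1/2,1)`. -/
def r0 (x : ℝ) : ℝ := if Int.fract x < 1/2 then 1 else -1

/-- The Rademacher functions. -/
def rademacher (n : ℕ) (x : ℝ) : ℝ := r0 (2 ^ n * x)

/-- The Walsh functions (in Paley enumeration, via binary digits). -/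
def walsh (n : ℕ) (x : ℝ) : ℝ :=
  ∏ k ∈ Finset.range (n + 1), if n.testBit k then rademacher k x else 1

/-- The Walsh–Dirichlet kernel `D_n`. -/
def dirichletKernel (n : ℕ) (x : ℝ) : ℝ := ∑ k ∈ Finset.range n, walsh k x

/-- `l_n = ∑_{k=1}^{n-1} 1/k`. -/
def logSum (n : ℕ) : ℝ := ∑ k ∈ Finset.Icc 1 (n - 1), (1 : ℝ) / k

/-- The Nörlund logarithmic kernel `F_n`. -/
def FKernel (n : ℕ) (u : ℝ) : ℝ :=
  (1 / logSum n) * ∑ i ∈ Finset.Ico 1 n, dirichletKernel (n - i) u / i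

/-- The Riesz logarithmic kernel `G_n`. -/
def GKernel (n : ℕ) (u : ℝ) : ℝ :=
  (1 / logSum n) * ∑ i ∈ Finset.Ico 1 n, dirichletKernel i u / i

/-- Walsh–Fourier coefficient of `f` on the unit cube. -/
def walshCoef {d : ℕ} (f : (Fin d → ℝ) → ℝ) (j : Fin d → ℕ) : ℝ :=
  ∫ x, f x * ∏ i, walsh (j i) (x i) ∂(cubeMeasure d)

/-- Rectangular partial sums of the multiple Walsh–Fourier series. -/
def rectPartialSum {d : ℕ} (f : (Fin d → ℝ) → ℝ) (N : Fin d → ℕ) (x : Fin d → ℝ) : ℝ :=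
  ∑ j ∈ Fintype.piFinset (fun i => Finset.range (N i)),
    walshCoef f j * ∏ i, walsh (j i) (x i)

/-- The mixed logarithmic means `(L_{n_B} ∘ R_{n_{B'}})(f)`. -/
def mixedLogMean {d : ℕ} (B : Finset (Fin d)) (f : (Fin d → ℝ) → ℝ)
    (n : Fin d → ℕ) (x : Fin d → ℝ) : ℝ :=
  (∏ j, logSum (n j))⁻¹ *
    ∑ i ∈ Fintype.piFinset (fun j => Finset.Ico 1 (n j)),
      rectPartialSum f (fun j => if j ∈ B then n j - i j else i j) x / ∏ j, (i j : ℝ)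

/-- A Young function: convex, continuous, even, vanishing at `0`, with
`Q(u)/u → ∞` at `+∞` and `Q(u)/u → 0` at `0`. -/
structure YoungFunction where
  toFun : ℝ → ℝ
  nonneg : ∀ u, 0 ≤ toFun u
  convexOn : ConvexOn ℝ Set.univ toFun
  continuous : Continuous toFun
  even : ∀ u, toFun (-u) = toFun u
  map_zero : toFun 0 = 0
  tendsto_atTop : Tendsto (fun u => toFun u / u) atTop atTop
  tendsto_zero : Tendsto (fun u => toFun u / u) (nhdsWithin 0 {(0:ℝ)}ᶜ) (nhds 0)

/-- The set of admissible constants `k` in the Luxemburg norm of `f`. -/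
def orliczSet {d : ℕ} (Q : YoungFunction) (f : (Fin d → ℝ) → ℝ) : Set ℝ :=
  {k | 0 < k ∧ Integrable (fun x => Q.toFun (|f x| / k)) (cubeMeasure d) ∧
    ∫ x, Q.toFun (|f x| / k) ∂(cubeMeasure d) ≤ 1}

/-- `f` belongs to the Orlicz space `L_Q(I^d)`. -/
def MemOrlicz {d : ℕ} (Q : YoungFunction) (f : (Fin d → ℝ) → ℝ) : Prop :=
  Measurable f ∧ (orliczSet Q f).Nonempty

/-- The Luxemburg norm on the Orlicz space `L_Q(I^d)`. -/
def orliczNorm {d : ℕ} (Q : YoungFunction) (f : (Fin d → ℝ) → ℝ) : ℝ :=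
  sInf (orliczSet Q f)

/-- `p_n = 2^{2n} + 2^{2n-2} + ⋯ + 2^0`. -/
def pIdx (n : ℕ) : ℕ := ∑ k ∈ Finset.range (n + 1), 4 ^ k

/-- `m̃ = ⌊ l_{p_{⌊m/2⌋}-1}/16 - 2^15 ⌋`. -/
def mTilde (m : ℕ) : ℤ := ⌊logSum (pIdx (m / 2) - 1) / 16 - 2 ^ 15⌋

/-- `m₀ = min{m : m̃ > 1}`. -/
def m₀ : ℕ := sInf {m : ℕ | 1 < mTilde m}

/-- The set `Ω_n`. -/
def Omega (n : ℕ) : Set ℝ :=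
  ⋃ m ∈ Finset.Icc n (2 * n),
    Set.Ico ((2:ℝ) ^ (-(m:ℤ) - 1) + (2:ℝ) ^ (-(m:ℤ) - mTilde m)) ((2:ℝ) ^ (-(m:ℤ)))

/-- `k`-th binary digit of `x` (the expansion not terminating in `1`'s). -/
def binDigit (k : ℕ) (x : ℝ) : ℕ := (⌊x * 2 ^ (k + 1)⌋).toNat % 2

/-- Dyadic addition on `[0,1)`. -/
def dyadicAdd (x t : ℝ) : ℝ :=
  ∑' k : ℕ, |(binDigit k x : ℝ) - (binDigit k t : ℝ)| / 2 ^ (k + 1)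

/-- Dyadic convolution `f ∗ K` on `[0,1)`. -/
def dyadicConv (f K : ℝ → ℝ) (x : ℝ) : ℝ :=
  ∫ t in Set.Ico (0:ℝ) 1, f t * K (dyadicAdd x t)

/-- Lebesgue measure restricted to `[0,1)`. -/
def unitMeasure : Measure ℝ := volume.restrict (Set.Ico (0:ℝ) 1)

/-- A set `A ⊆ L_Q(I^d)` is nowhere dense w.r.t. the Luxemburg norm. -/
def OrliczNowhereDense {d : ℕ} (Q : YoungFunction) (A : Set ((Fin d → ℝ) → ℝ)) : Prop :=
  ∀ f, MemOrlicz Q f → ∀ ε > 0, ∃ g, MemOrlicz Q g ∧ ∃ δ > 0,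
    (∀ h, MemOrlicz Q h → orliczNorm Q (h - g) < δ → orliczNorm Q (h - f) < ε) ∧
    (∀ h, MemOrlicz Q h → orliczNorm Q (h - g) < δ → h ∉ A)

/-- A set `A ⊆ L_Q(I^d)` is of first Baire category (meager) w.r.t. the Luxemburg norm. -/
def OrliczMeager {d : ℕ} (Q : YoungFunction) (A : Set ((Fin d → ℝ) → ℝ)) : Prop :=
  ∃ F : ℕ → Set ((Fin d → ℝ) → ℝ), (∀ k, OrliczNowhereDense Q (F k)) ∧ A ⊆ ⋃ k, F k


lemma aux_r0_sq (x : ℝ) : r0 x * r0 x = 1 := by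
  unfold r0; split_ifs <;> norm_num

lemma aux_r0_abs (x : ℝ) : |r0 x| = 1 := by
  unfold r0; split_ifs <;> norm_num

lemma aux_walsh_range (n N : ℕ) (h : n < 2 ^ N) (x : ℝ) :
    walsh n x = ∏ k ∈ Finset.range N, if n.testBit k then rademacher k x else 1 := by
  have key : ∀ A B : ℕ, A ≤ B → n < 2 ^ A →
      ∏ k ∈ Finset.range B, (if n.testBit k then rademacher k x else 1) =
      ∏ k ∈ Finset.range A, (if n.testBit k then rademacher k x else 1) := by
    intro A B hAB hA
    symm
    apply Finset.prod_subset (Finset.range_mono hAB)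
    intro k _ hk
    have hk' : A ≤ k := by simpa using hk
    have : n.testBit k = false :=
      Nat.testBit_lt_two_pow (hA.trans_le (Nat.pow_le_pow_right (by norm_num) hk'))
    simp [this]
  unfold walsh
  have h1 : n < 2 ^ (n + 1) := (Nat.lt_succ_self n).trans Nat.lt_two_pow_self
  rcases le_total (n + 1) N with h2 | h2
  · exact (key _ _ h2 h1).symm
  · exact key _ _ h2 h

lemma aux_walsh_xor (j k : ℕ) (x : ℝ) : walsh j x * walsh k x = walsh (j ^^^ k) x := by
  have hj : j < 2 ^ (j + k) :=
    Nat.lt_two_pow_self.trans_le (Nat.pow_le_pow_right (by norm_num) (by omega))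
  have hk : k < 2 ^ (j + k) :=
    Nat.lt_two_pow_self.trans_le (Nat.pow_le_pow_right (by norm_num) (by omega))
  rw [aux_walsh_range j _ hj, aux_walsh_range k _ hk,
    aux_walsh_range (j ^^^ k) _ (Nat.xor_lt_two_pow hj hk), ← Finset.prod_mul_distrib]
  apply Finset.prod_congr rfl
  intro i _
  rw [Nat.testBit_xor]
  have := aux_r0_sq (2 ^ i * x)
  cases j.testBit i <;> cases k.testBit i <;> simp [rademacher, this]

lemma aux_walsh_zero (x : ℝ) : walsh 0 x = 1 := by simp [walsh]

lemma aux_walsh_sq (j : ℕ) (x : ℝ) : walsh j x * walsh j x = 1 := by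
  rw [aux_walsh_xor]; simp [aux_walsh_zero]

lemma aux_walsh_abs (j : ℕ) (x : ℝ) : |walsh j x| = 1 := by
  have h := aux_walsh_sq j x
  have h2 : |walsh j x| * |walsh j x| = 1 := by rw [← abs_mul, h, abs_one]
  nlinarith [abs_nonneg (walsh j x)]

lemma aux_r0_meas : Measurable r0 := by
  unfold r0
  exact Measurable.ite (measurableSet_lt measurable_fract measurable_const)
    measurable_const measurable_const

lemma aux_walsh_meas (n : ℕ) : Measurable (walsh n) := by
  unfold walsh
  apply Finset.measurable_fun_prod
  intro k _
  split_ifs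
  · exact aux_r0_meas.comp (measurable_const.mul measurable_id)
  · exact measurable_const

lemma aux_walsh_int (n : ℕ) (μ : Measure ℝ) [IsFiniteMeasure μ] : Integrable (walsh n) μ := by
  apply Integrable.of_bound (aux_walsh_meas n).aestronglyMeasurable 1
  filter_upwards with x
  rw [Real.norm_eq_abs, aux_walsh_abs]

lemma aux_walsh_iint (n : ℕ) (a b : ℝ) : IntervalIntegrable (walsh n) volume a b := by
  constructor <;> exact aux_walsh_int n _

lemma aux_walsh_bit (n : ℕ) (b : Bool) (x : ℝ) :
    walsh (2 * n + b.toNat) x = (if b then r0 x else 1) * walsh n (2 * x) := by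
  have h1 : 2 * n + b.toNat < 2 ^ (n + 1 + 1) := by
    have : n < 2 ^ n := Nat.lt_two_pow_self
    have hb : b.toNat ≤ 1 := Bool.toNat_le b
    rw [pow_succ, pow_succ]; omega
  rw [aux_walsh_range _ _ h1, Finset.prod_range_succ', mul_comm]
  congr 1
  · cases b <;> simp [rademacher, Nat.testBit_zero]
  · unfold walsh
    apply Finset.prod_congr rfl
    intro k _
    have : (2 * n + b.toNat).testBit (k + 1) = n.testBit k := by
      rw [Nat.testBit_succ]
      congr 1
      cases b <;> simp <;> omega
    rw [this]
    simp only [rademacher]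
    rw [show (2:ℝ) ^ (k + 1) * x = 2 ^ k * (2 * x) by ring]

/-- `r0` is constant on half-integer dyadic intervals. -/
lemma aux_r0_const (k : ℕ) (x : ℝ) (h1 : (k : ℝ) / 2 ≤ x) (h2 : x < ((k : ℝ) + 1) / 2) :
    r0 x = if k % 2 = 0 then 1 else -1 := by
  unfold r0
  have hk : (k : ℝ) = 2 * ((k / 2 : ℕ) : ℝ) + ((k % 2 : ℕ) : ℝ) := by
    exact_mod_cast (Nat.div_add_mod k 2).symm
  have hm : k % 2 < 2 := Nat.mod_lt _ (by norm_num)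
  have hfl : ⌊x⌋ = ((k / 2 : ℕ) : ℤ) := by
    rw [Int.floor_eq_iff]
    have : ((k % 2 : ℕ) : ℝ) ≤ 1 := by exact_mod_cast (by omega : k % 2 ≤ 1)
    have h0 : (0 : ℝ) ≤ ((k % 2 : ℕ) : ℝ) := Nat.cast_nonneg _
    rw [Int.cast_natCast]
    constructor <;> linarith
  have hfr : Int.fract x = x - ((k / 2 : ℕ) : ℝ) := by
    unfold Int.fract; rw [hfl, Int.cast_natCast]
  rw [hfr]
  rcases (by omega : k % 2 = 0 ∨ k % 2 = 1) with h | h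
  · rw [h] at hk
    rw [if_pos, if_pos h]
    push_cast at hk; linarith
  · rw [h] at hk
    rw [if_neg, if_neg (by omega)]
    push_cast at hk; linarith

lemma aux_half (n : ℕ) (b : Bool) (u v : ℝ) (huv : u ≤ v) (k : ℕ) (h1 : (k : ℝ) ≤ u)
    (h2 : v ≤ (k : ℝ) + 1) :
    ∫ x in (u / 2)..(v / 2), walsh (2 * n + b.toNat) x =
      (if b ∧ k % 2 ≠ 0 then -1 else 1) * (1 / 2) * ∫ x in u..v, walsh n x := by
  have e : ∫ x in (u / 2)..(v / 2), walsh (2 * n + b.toNat) x =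
      ∫ x in (u / 2)..(v / 2), (if b ∧ k % 2 ≠ 0 then -1 else 1) * walsh n (2 * x) := by
    rw [intervalIntegral.integral_of_le (by linarith), intervalIntegral.integral_of_le (by linarith),
      ← integral_Ico_eq_integral_Ioc, ← integral_Ico_eq_integral_Ioc]
    apply setIntegral_congr_fun measurableSet_Ico
    intro x hx
    simp only
    rw [aux_walsh_bit, aux_r0_const k x (by linarith [hx.1]) (by linarith [hx.2])]
    cases b <;> by_cases h : k % 2 = 0 <;> simp [h]
  rw [e, intervalIntegral.integral_const_mul,
    intervalIntegral.integral_comp_mul_left (fun x => walsh n x) (two_ne_zero)]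
  have a1 : 2 * (u / 2) = u := by ring
  have a2 : 2 * (v / 2) = v := by ring
  rw [a1, a2, smul_eq_mul]; ring

lemma aux_int_zero0 (n : ℕ) (hn : 1 ≤ n) : ∀ k : ℕ,
    ∫ x in (k : ℝ)..((k : ℝ) + 1), walsh n x = 0 := by
  induction n using Nat.strong_induction_on with
  | _ n ih =>
  intro k
  obtain ⟨n', b, rfl⟩ : ∃ (n' : ℕ) (b : Bool), n = 2 * n' + b.toNat := by
    rcases Nat.even_or_odd' n with ⟨c, h | h⟩
    · exact ⟨c, false, by simpa using h⟩
    · exact ⟨c, true, by simpa using h⟩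
  rw [← intervalIntegral.integral_add_adjacent_intervals
    (b := ((2 * k + 1 : ℕ) : ℝ) / 2) (aux_walsh_iint _ _ _) (aux_walsh_iint _ _ _)]
  have l1 := aux_half n' b ((2 * k : ℕ) : ℝ) ((2 * k + 1 : ℕ) : ℝ) (by push_cast; linarith)
    (2 * k) (le_refl _) (by push_cast; linarith)
  have l2 := aux_half n' b ((2 * k + 1 : ℕ) : ℝ) ((2 * k + 1 : ℕ) + 1 : ℝ) (by linarith)
    (2 * k + 1) (le_refl _) (le_refl _)
  have e1 : ((2 * k : ℕ) : ℝ) / 2 = k := by push_cast; ring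
  have e2 : (((2 * k + 1 : ℕ) : ℝ) + 1) / 2 = (k : ℝ) + 1 := by push_cast; ring
  rw [e1] at l1
  rw [e2] at l2
  rw [l1, l2]
  rcases Nat.eq_zero_or_pos n' with h0 | h0
  · subst h0
    have hb : b = true := by
      cases b
      · simp at hn
      · rfl
    subst hb
    have : (2 * k + 1) % 2 = 1 := by omega
    simp [aux_walsh_zero, this]
  · have hlt : n' < 2 * n' + b.toNat := by omega
    have i1 := ih n' hlt h0 (2 * k)
    have i2 := ih n' hlt h0 (2 * k + 1)
    have e3 : ((2 * k + 1 : ℕ) : ℝ) = ((2 * k : ℕ) : ℝ) + 1 := by push_cast; ring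
    rw [i2, e3, i1]; simp

lemma aux_int_zero (M : ℕ) : ∀ n : ℕ, 2 ^ M ≤ n → ∀ k : ℕ,
    ∫ x in ((k : ℝ) / 2 ^ M)..(((k : ℝ) + 1) / 2 ^ M), walsh n x = 0 := by
  induction M with
  | zero =>
    intro n hn k
    simpa using aux_int_zero0 n (by simpa using hn) k
  | succ M ih =>
    intro n hn k
    obtain ⟨n', b, rfl⟩ : ∃ (n' : ℕ) (b : Bool), n = 2 * n' + b.toNat := by
      rcases Nat.even_or_odd' n with ⟨c, h | h⟩
      · exact ⟨c, false, by simpa using h⟩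
      · exact ⟨c, true, by simpa using h⟩
    have hb : b.toNat ≤ 1 := Bool.toNat_le b
    have hn' : 2 ^ M ≤ n' := by rw [pow_succ] at hn; omega
    have hp : (0 : ℝ) < 2 ^ M := by positivity
    have hq : (0 : ℕ) < 2 ^ M := by positivity
    have e1 : (k : ℝ) / 2 ^ (M + 1) = ((k : ℝ) / 2 ^ M) / 2 := by rw [pow_succ]; field_simp
    have e2 : ((k : ℝ) + 1) / 2 ^ (M + 1) = (((k : ℝ) + 1) / 2 ^ M) / 2 := by
      rw [pow_succ]; field_simp
    rw [e1, e2, aux_half n' b _ _ (by gcongr; linarith) (k / 2 ^ M), ih n' hn' k, mul_zero]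
    · rw [le_div_iff₀ hp]
      exact_mod_cast Nat.div_mul_le_self k (2 ^ M)
    · rw [div_le_iff₀ hp]
      have := Nat.lt_div_mul_add (a := k) hq
      have h3 : k + 1 ≤ (k / 2 ^ M + 1) * 2 ^ M := by rw [add_mul]; omega
      exact_mod_cast h3

lemma aux_orth (j k : ℕ) :
    ∫ x in Set.Ico (0 : ℝ) 1, walsh j x * walsh k x = if j = k then 1 else 0 := by
  simp_rw [aux_walsh_xor]
  split_ifs with h
  · subst h; simp [aux_walsh_zero]
  · have h1 : 1 ≤ j ^^^ k := Nat.pos_of_ne_zero (by rwa [Ne, Nat.xor_eq_zero_iff])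
    have := aux_int_zero0 _ h1 0
    rw [integral_Ico_eq_integral_Ioc, ← intervalIntegral.integral_of_le (by norm_num)]
    simpa using this

lemma aux_walsh_ring (m s : ℕ) (x : ℝ) (h1 : (1 : ℝ) / 2 ^ (m + 1) ≤ x) (h2 : x < 2 / 2 ^ (m + 1))
    (hs : s < 2 ^ (m + 1)) : walsh s x = if s < 2 ^ m then 1 else -1 := by
  have hx0 : 0 < x := lt_of_lt_of_le (by positivity) h1
  have hp : (0 : ℝ) < 2 ^ m := by positivity
  rw [pow_succ, div_le_iff₀ (by positivity)] at h1
  rw [pow_succ, lt_div_iff₀ (by positivity)] at h2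
  have hr : ∀ k < m, rademacher k x = 1 := by
    intro k hk
    have hk2 : (2 : ℝ) ^ (k + 1) ≤ 2 ^ m := pow_le_pow_right₀ (by norm_num) hk
    rw [pow_succ] at hk2
    have := mul_le_mul_of_nonneg_right hk2 hx0.le
    have := aux_r0_const 0 (2 ^ k * x) (by simp; positivity) (by simp; nlinarith)
    simpa [rademacher] using this
  have hrm : rademacher m x = -1 := by
    have := aux_r0_const 1 (2 ^ m * x) (by simp; nlinarith) (by simp; nlinarith)
    simpa [rademacher] using this
  rw [aux_walsh_range s _ hs, Finset.prod_range_succ, Finset.prod_eq_one, one_mul, hrm]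
  · split_ifs with h3 h4 h4
    · rw [Nat.testBit_lt_two_pow h4] at h3; simp at h3
    · rfl
    · rfl
    · exfalso
      apply h3
      exact Nat.testBit_of_two_pow_le_and_two_pow_add_one_gt (by omega) hs
  · intro k hk
    rw [hr k (by simpa using hk)]; simp

lemma aux_xor_block (M q s : ℕ) (hs : s < 2 ^ M) : (2 ^ M * q) ^^^ s = 2 ^ M * q + s := by
  apply Nat.eq_of_testBit_eq
  intro i
  rw [Nat.testBit_xor, Nat.testBit_two_pow_mul_add _ hs]
  have h0 := Nat.testBit_two_pow_mul_add (i := M) q (b := 0) (by positivity) i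
  rw [add_zero] at h0
  rw [h0]
  split_ifs with h
  · simp
  · rw [Nat.testBit_lt_two_pow (x := s)
      (hs.trans_le (Nat.pow_le_pow_right (by norm_num) (by omega)))]; simp

lemma aux_walsh_block (M q s : ℕ) (hs : s < 2 ^ M) (x : ℝ) :
    walsh (2 ^ M * q + s) x = walsh (2 ^ M * q) x * walsh s x := by
  rw [aux_walsh_xor, aux_xor_block _ _ _ hs]

/-- partial sums of the sign sequence -/
def auxTau (m s : ℕ) : ℝ := ∑ t ∈ Finset.range s, if t < 2 ^ m then (1 : ℝ) else -1

lemma aux_tau_le (m s : ℕ) (hs : s ≤ 2 ^ m) : auxTau m s = s := by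
  unfold auxTau
  rw [Finset.sum_congr rfl (g := fun _ => (1 : ℝ))]
  · simp
  · intro t ht
    rw [if_pos]
    have := Finset.mem_range.1 ht
    omega

lemma aux_tau_ge (m s : ℕ) : auxTau m (2 ^ m + s) = 2 ^ m - s := by
  induction s with
  | zero => simp [aux_tau_le]
  | succ s ih =>
    have : auxTau m (2 ^ m + (s + 1)) = auxTau m (2 ^ m + s) + -1 := by
      unfold auxTau
      rw [← add_assoc, Finset.sum_range_succ, if_neg (by omega)]
    rw [this, ih]; push_cast; ring

lemma aux_tau_nonneg (m s : ℕ) (hs : s ≤ 2 ^ (m + 1)) : 0 ≤ auxTau m s := by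
  rcases le_total s (2 ^ m) with h | h
  · rw [aux_tau_le _ _ h]; positivity
  · obtain ⟨t, rfl⟩ := Nat.exists_eq_add_of_le h
    rw [aux_tau_ge]
    have : t ≤ 2 ^ m := by rw [pow_succ] at hs; omega
    have : (t : ℝ) ≤ 2 ^ m := by exact_mod_cast this
    linarith

lemma aux_tau_mid (m s : ℕ) (h1 : 2 ^ m ≤ 4 * s) (h2 : 3 * s ≤ 4 * 2 ^ m) :
    2 ^ m / 4 ≤ auxTau m s := by
  have h1' : (2 : ℝ) ^ m ≤ 4 * s := by exact_mod_cast h1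
  have hp : (0 : ℝ) < 2 ^ m := by positivity
  rcases le_total s (2 ^ m) with h | h
  · rw [aux_tau_le _ _ h]; linarith
  · obtain ⟨t, rfl⟩ := Nat.exists_eq_add_of_le h
    rw [aux_tau_ge]
    have : 3 * t ≤ 2 ^ m := by omega
    have : 3 * (t : ℝ) ≤ 2 ^ m := by exact_mod_cast this
    linarith

/-- the dyadic ring -/
def auxRing (m : ℕ) : Set ℝ := Set.Ico ((1 : ℝ) / 2 ^ (m + 1)) (2 / 2 ^ (m + 1))

lemma aux_ring_sum (m q s : ℕ) (hs : s ≤ 2 ^ (m + 1)) (x : ℝ) (hx : x ∈ auxRing m) :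
    dirichletKernel (2 ^ (m + 1) * q + s) x =
      dirichletKernel (2 ^ (m + 1) * q) x + walsh (2 ^ (m + 1) * q) x * auxTau m s := by
  unfold dirichletKernel auxTau
  rw [Finset.sum_range_add, Finset.mul_sum]
  congr 1
  apply Finset.sum_congr rfl
  intro t ht
  have ht' : t < 2 ^ (m + 1) := (Finset.mem_range.1 ht).trans_le hs
  rw [aux_walsh_block _ _ _ ht', aux_walsh_ring m t x hx.1 hx.2 ht']

lemma aux_ring_dir0 (m q : ℕ) (x : ℝ) (hx : x ∈ auxRing m) :
    dirichletKernel (2 ^ (m + 1) * q) x = 0 := by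
  induction q with
  | zero => simp [dirichletKernel]
  | succ q ih =>
    have h := aux_tau_ge m (2 ^ m)
    rw [mul_add, mul_one, aux_ring_sum m q _ le_rfl x hx, ih, pow_succ, mul_two, h]
    simp

lemma aux_tau_abs (m s : ℕ) : |auxTau m s| ≤ s := by
  unfold auxTau
  refine (Finset.abs_sum_le_sum_abs _ _).trans ?_
  calc _ ≤ ∑ t ∈ Finset.range s, (1 : ℝ) := by
        apply Finset.sum_le_sum
        intro t _
        split_ifs <;> simp
    _ = s := by simp

lemma aux_ring_bound (m k : ℕ) (x : ℝ) (hx : x ∈ auxRing m) :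
    |dirichletKernel k x| ≤ 2 ^ (m + 1) := by
  have hlt : k % 2 ^ (m + 1) < 2 ^ (m + 1) := Nat.mod_lt _ (by positivity)
  rw [← Nat.div_add_mod k (2 ^ (m + 1)), aux_ring_sum m _ _ hlt.le x hx, aux_ring_dir0 m _ x hx,
    zero_add, abs_mul, aux_walsh_abs, one_mul]
  refine (aux_tau_abs _ _).trans ?_
  exact_mod_cast hlt.le

lemma aux_ring_int_walsh (m n : ℕ) (hn : 2 ^ (m + 1) ≤ n) : ∫ x in auxRing m, walsh n x = 0 := by
  have h := aux_int_zero (m + 1) n hn 1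
  unfold auxRing
  rw [integral_Ico_eq_integral_Ioc, ← intervalIntegral.integral_of_le (by gcongr; norm_num)]
  norm_num at h ⊢
  exact h

lemma aux_ring_vol (m : ℕ) : volume.real (auxRing m) = 1 / 2 ^ (m + 1) := by
  unfold auxRing
  rw [Real.volume_real_Ico_of_le (by gcongr; norm_num)]
  ring

instance aux_ring_fin (m : ℕ) : IsFiniteMeasure (volume.restrict (auxRing m)) := by
  unfold auxRing; infer_instance

lemma aux_dir_meas (n : ℕ) : Measurable (dirichletKernel n) := by
  unfold dirichletKernel
  exact Finset.measurable_fun_sum _ fun k _ => aux_walsh_meas k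

lemma aux_wd_int (Q k : ℕ) (μ : Measure ℝ) [IsFiniteMeasure μ] :
    Integrable (fun x => walsh Q x * dirichletKernel k x) μ := by
  simp only [dirichletKernel, Finset.mul_sum, aux_walsh_xor]
  exact integrable_finsetSum _ fun j _ => aux_walsh_int _ _

lemma aux_ring_corr0 (m q k : ℕ) (hk : k ≤ 2 ^ (m + 1) * q) :
    ∫ x in auxRing m, walsh (2 ^ (m + 1) * q) x * dirichletKernel k x = 0 := by
  simp only [dirichletKernel, Finset.mul_sum, aux_walsh_xor]
  rw [integral_finsetSum _ fun j _ => aux_walsh_int _ _]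
  apply Finset.sum_eq_zero
  intro j hj
  apply aux_ring_int_walsh
  by_contra hlt
  push Not at hlt
  have h1 := aux_xor_block (m + 1) q _ hlt
  rw [← Nat.xor_assoc, Nat.xor_self, Nat.zero_xor] at h1
  have := Finset.mem_range.1 hj
  omega

lemma aux_ring_corr (m q s : ℕ) (hs : s ≤ 2 ^ (m + 1)) :
    ∫ x in auxRing m, walsh (2 ^ (m + 1) * q) x * dirichletKernel (2 ^ (m + 1) * q + s) x =
      auxTau m s / 2 ^ (m + 1) := by
  have : ∫ x in auxRing m, walsh (2 ^ (m + 1) * q) x * dirichletKernel (2 ^ (m + 1) * q + s) x =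
      ∫ x in auxRing m, auxTau m s := by
    apply setIntegral_congr_fun measurableSet_Ico
    intro x hx
    simp only
    rw [aux_ring_sum m q s hs x hx, aux_ring_dir0 m q x hx, zero_add, ← mul_assoc, aux_walsh_sq,
      one_mul]
  rw [this, setIntegral_const, aux_ring_vol, smul_eq_mul]
  ring

lemma aux_pIdx (n : ℕ) : 3 * pIdx n + 1 = 4 * 4 ^ n := by
  unfold pIdx
  induction n with
  | zero => simp
  | succ n ih => rw [Finset.sum_range_succ, pow_succ]; omega

lemma aux_pIdx_split (n m : ℕ) (h : m ≤ 2 * n) :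
    ∃ q, pIdx n = 2 ^ (m + 1) * q + pIdx (m / 2) := by
  have hd : 2 ^ (m + 1) ∣ 4 ^ (m / 2 + 1) := by
    rw [show (4 : ℕ) = 2 ^ 2 by norm_num, ← pow_mul]
    exact pow_dvd_pow 2 (by omega)
  have hle : m / 2 ≤ n := by omega
  unfold pIdx
  rw [Finset.range_eq_Ico, ← Finset.sum_Ico_consecutive _ (Nat.zero_le (m / 2 + 1))
    (by omega : m / 2 + 1 ≤ n + 1)]
  have : 2 ^ (m + 1) ∣ ∑ k ∈ Finset.Ico (m / 2 + 1) (n + 1), 4 ^ k := by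
    apply Finset.dvd_sum
    intro k hk
    exact hd.trans (pow_dvd_pow 4 (Finset.mem_Ico.1 hk).1)
  obtain ⟨q, hq⟩ := this
  exact ⟨q, by rw [hq, add_comm, Finset.range_eq_Ico]⟩

lemma aux_logSum_harm (n : ℕ) : logSum n = (harmonic (n - 1) : ℝ) := by
  rw [harmonic_eq_sum_Icc]; unfold logSum; push_cast
  simp

lemma aux_logSum_p (n : ℕ) (hn : 1 ≤ n) : 1 ≤ logSum (pIdx n) ∧
    logSum (pIdx n) ≤ 1 + (2 * n + 1) * Real.log 2 := by
  have hp := aux_pIdx n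
  have h4 : 4 ^ 1 ≤ 4 ^ n := Nat.pow_le_pow_right (by norm_num) hn
  constructor
  · unfold logSum
    have := Finset.single_le_sum (s := Finset.Icc 1 (pIdx n - 1)) (f := fun k : ℕ => (1 : ℝ) / k)
      (fun i _ => by positivity) (a := 1) (Finset.mem_Icc.2 (by omega))
    simpa using this
  · rw [aux_logSum_harm]
    refine (harmonic_le_one_add_log _).trans ?_
    have h1 : pIdx n - 1 ≤ 2 ^ (2 * n + 1) := by
      rw [pow_succ, pow_mul]; norm_num; omega
    have h2 : Real.log ((pIdx n - 1 : ℕ) : ℝ) ≤ Real.log ((2 : ℝ) ^ (2 * n + 1)) := by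
      apply Real.log_le_log
      · exact_mod_cast (by omega : 0 < pIdx n - 1)
      · exact_mod_cast h1
    rw [Real.log_pow] at h2
    push_cast at h2
    linarith

lemma aux_harm_low (k : ℕ) : (1 + k * Real.log 2) / 2 ≤ ∑ i ∈ Finset.Icc (1 : ℕ) (2 ^ k), (1 : ℝ) / i := by
  have h1 : (1 : ℝ) ≤ ∑ i ∈ Finset.Icc (1 : ℕ) (2 ^ k), (1 : ℝ) / i := by
    have := Finset.single_le_sum (s := Finset.Icc 1 (2 ^ k)) (f := fun k : ℕ => (1 : ℝ) / k)
      (fun i _ => by positivity) (a := 1) (Finset.mem_Icc.2 ⟨le_rfl, Nat.one_le_two_pow⟩)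
    simpa using this
  have h2 := log_add_one_le_harmonic (2 ^ k)
  have h3 : Real.log ((2 : ℝ) ^ k) ≤ Real.log (((2 ^ k + 1 : ℕ)) : ℝ) := by
    apply Real.log_le_log (by positivity)
    push_cast; linarith
  rw [Real.log_pow] at h3
  have h4 : (harmonic (2 ^ k) : ℝ) = ∑ i ∈ Finset.Icc (1 : ℕ) (2 ^ k), (1 : ℝ) / i := by
    rw [harmonic_eq_sum_Icc]; push_cast; simp
  rw [h4] at h2
  linarith

lemma aux_F_bound (n m : ℕ) (hn : 1 ≤ n) (x : ℝ) (hx : x ∈ auxRing m) :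
    |FKernel (pIdx n) x| ≤ 2 ^ (m + 1) := by
  have hl := (aux_logSum_p n hn).1
  unfold FKernel
  rw [abs_mul, abs_of_nonneg (by positivity), one_div, inv_mul_le_iff₀ (by linarith)]
  refine (Finset.abs_sum_le_sum_abs _ _).trans ?_
  have hI : Finset.Icc 1 (pIdx n - 1) = Finset.Ico 1 (pIdx n) := by
    have hp := aux_pIdx n
    have h4 : 0 < 4 ^ n := by positivity
    ext i; simp only [Finset.mem_Icc, Finset.mem_Ico]; omega
  unfold logSum
  rw [hI, Finset.sum_mul]
  apply Finset.sum_le_sum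
  intro i hi
  rw [abs_div, Nat.abs_cast, div_eq_mul_one_div, mul_comm]
  gcongr
  exact aux_ring_bound m _ x hx

lemma aux_F_meas (n : ℕ) : Measurable (FKernel n) := by
  unfold FKernel
  exact measurable_const.mul (Finset.measurable_fun_sum _ fun i _ =>
    (aux_dir_meas _).div_const _)

lemma aux_F_corr (n m : ℕ) (hn : 2 ≤ n) (hm1 : n ≤ m) (hm2 : m ≤ 2 * n) :
    ∃ Q, 2 ^ m / 64 / 2 ^ (m + 1) ≤ ∫ x in auxRing m, walsh Q x * FKernel (pIdx n) x := by
  obtain ⟨q, hq⟩ := aux_pIdx_split n m hm2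
  refine ⟨2 ^ (m + 1) * q, ?_⟩
  set r := pIdx (m / 2) with hr
  have hr3 := aux_pIdx (m / 2)
  rw [← hr] at hr3
  have hcase : (2 ^ m = 4 ^ (m / 2) ∨ 2 ^ m = 2 * 4 ^ (m / 2)) := by
    rw [show (4 : ℕ) = 2 ^ 2 by norm_num, ← pow_mul]
    rcases Nat.even_or_odd' m with ⟨c, h | h⟩
    · left; congr 1; omega
    · right
      rw [mul_comm, ← pow_succ]; congr 1; omega
  have h2m : 2 ^ m = 4 * 2 ^ (m - 2) := by
    rw [show (4 : ℕ) = 2 ^ 2 by norm_num, ← pow_add]; congr 1; omega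
  have hrle : r ≤ 2 ^ (m + 1) := by rw [pow_succ]; omega
  have h4pos : 0 < 2 ^ (m - 2) := by positivity
  obtain ⟨hl1, hl2⟩ := aux_logSum_p n (by omega)
  have e : ∀ x, walsh (2 ^ (m + 1) * q) x * FKernel (pIdx n) x =
      1 / logSum (pIdx n) * ∑ i ∈ Finset.Ico 1 (pIdx n),
        walsh (2 ^ (m + 1) * q) x * dirichletKernel (pIdx n - i) x * (1 / (i : ℝ)) := by
    intro x
    unfold FKernel
    rw [mul_left_comm, Finset.mul_sum]
    congr 1
    apply Finset.sum_congr rfl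
    intro i _
    ring
  simp only [e]
  rw [integral_const_mul, integral_finsetSum _ fun i _ => (aux_wd_int _ _ _).mul_const _]
  simp only [integral_mul_const]
  have hnn : ∀ i ∈ Finset.Ico 1 (pIdx n), 0 ≤
      (∫ x in auxRing m, walsh (2 ^ (m + 1) * q) x * dirichletKernel (pIdx n - i) x) *
        (1 / (i : ℝ)) := by
    intro i _
    apply mul_nonneg _ (by positivity)
    rcases le_total (pIdx n - i) (2 ^ (m + 1) * q) with h | h
    · rw [aux_ring_corr0 m q _ h]
    · obtain ⟨s, hs⟩ := Nat.exists_eq_add_of_le h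
      have hs' : s ≤ 2 ^ (m + 1) := by omega
      rw [hs, aux_ring_corr m q s hs']
      exact div_nonneg (aux_tau_nonneg m s hs') (by positivity)
  have hsub : Finset.Icc 1 (2 ^ (m - 2)) ⊆ Finset.Ico 1 (pIdx n) := by
    intro i hi
    rw [Finset.mem_Icc] at hi
    rw [Finset.mem_Ico]
    omega
  have hlow : 2 ^ m / 4 / 2 ^ (m + 1) * ∑ i ∈ Finset.Icc (1 : ℕ) (2 ^ (m - 2)), (1 : ℝ) / i ≤
      ∑ i ∈ Finset.Ico 1 (pIdx n),
      (∫ x in auxRing m, walsh (2 ^ (m + 1) * q) x * dirichletKernel (pIdx n - i) x) *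
        (1 / (i : ℝ)) := by
    refine le_trans ?_ (Finset.sum_le_sum_of_subset_of_nonneg hsub fun i hi _ => hnn i hi)
    rw [Finset.mul_sum]
    apply Finset.sum_le_sum
    intro i hi
    rw [Finset.mem_Icc] at hi
    have hs : pIdx n - i = 2 ^ (m + 1) * q + (r - i) := by omega
    rw [hs, aux_ring_corr m q (r - i) (by omega)]
    gcongr
    exact aux_tau_mid m (r - i) (by omega) (by omega)
  have hharm := aux_harm_low (m - 2)
  have hlog := Real.log_two_gt_d9
  have hlog' := Real.log_two_lt_d9
  have hfin : logSum (pIdx n) / 16 ≤ ∑ i ∈ Finset.Icc (1 : ℕ) (2 ^ (m - 2)), (1 : ℝ) / i := by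
    refine le_trans ?_ hharm
    have c1 : ((m - 2 : ℕ) : ℝ) = m - 2 := by
      rw [Nat.cast_sub (by omega)]; norm_num
    have c2 : (n : ℝ) ≤ m := by exact_mod_cast hm1
    have c3 : (2 : ℝ) ≤ n := by exact_mod_cast hn
    rw [c1]
    nlinarith
  rw [one_div, le_inv_mul_iff₀ (by linarith)]
  refine le_trans ?_ hlow
  have hp : (0 : ℝ) ≤ 2 ^ m / 4 / 2 ^ (m + 1) := by positivity
  calc _ = 2 ^ m / 4 / 2 ^ (m + 1) * (logSum (pIdx n) / 16) := by ring
    _ ≤ _ := by gcongr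

/-- the good set in the ring -/
def auxE (n m : ℕ) : Set ℝ := auxRing m ∩ {x | 2 ^ m / 128 ≤ |FKernel (pIdx n) x|}

lemma aux_E_meas (n m : ℕ) : MeasurableSet (auxE n m) :=
  measurableSet_Ico.inter (measurableSet_le measurable_const (aux_F_meas _).abs)

lemma aux_E_vol (n m : ℕ) (hn : 2 ≤ n) (hm1 : n ≤ m) (hm2 : m ≤ 2 * n) :
    1 / 2 ^ m / 512 ≤ volume.real (auxE n m) := by
  obtain ⟨Q, hQ⟩ := aux_F_corr n m hn hm1 hm2
  have hpt : ∀ x ∈ auxRing m, walsh Q x * FKernel (pIdx n) x ≤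
      2 ^ m / 128 + (auxE n m).indicator (fun _ => (2 : ℝ) ^ (m + 1)) x := by
    intro x hx
    have h1 : walsh Q x * FKernel (pIdx n) x ≤ |FKernel (pIdx n) x| := by
      refine (le_abs_self _).trans ?_
      rw [abs_mul, aux_walsh_abs, one_mul]
    have hp : (0 : ℝ) < 2 ^ m := by positivity
    by_cases hE : x ∈ auxE n m
    · rw [Set.indicator_of_mem hE]
      have := aux_F_bound n m (by omega) x hx
      linarith
    · rw [Set.indicator_of_notMem hE]
      have : ¬ (2 ^ m / 128 ≤ |FKernel (pIdx n) x|) := fun h => hE ⟨hx, h⟩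
      push Not at this
      linarith
  have hi1 : Integrable (fun x => walsh Q x * FKernel (pIdx n) x)
      (volume.restrict (auxRing m)) := by
    apply Integrable.of_bound
      ((aux_walsh_meas Q).mul (aux_F_meas _)).aestronglyMeasurable (2 ^ (m + 1))
    filter_upwards [ae_restrict_mem (measurableSet_Ico : MeasurableSet (auxRing m))] with x hx
    rw [Real.norm_eq_abs, Pi.mul_apply, abs_mul, aux_walsh_abs, one_mul]
    exact aux_F_bound n m (by omega) x hx
  have hi2 : Integrable ((auxE n m).indicator (fun _ => (2 : ℝ) ^ (m + 1)))
      (volume.restrict (auxRing m)) :=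
    (integrable_const _).indicator (aux_E_meas n m)
  have h := setIntegral_mono_on hi1 ((integrable_const (2 ^ m / 128 : ℝ)).add hi2)
    measurableSet_Ico hpt
  have h' : ∫ x in auxRing m, (2 ^ m / 128 + (auxE n m).indicator (fun _ => (2 : ℝ) ^ (m + 1)) x)
      = 2 ^ m / 128 * (1 / 2 ^ (m + 1)) + 2 ^ (m + 1) * volume.real (auxE n m) := by
    rw [integral_add (integrable_const _) hi2, setIntegral_const, aux_ring_vol,
      setIntegral_indicator (aux_E_meas n m), setIntegral_const]
    have : auxRing m ∩ auxE n m = auxE n m := Set.inter_eq_right.2 Set.inter_subset_left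
    rw [this, smul_eq_mul, smul_eq_mul]; ring
  simp only [Pi.add_apply] at h
  rw [h'] at h
  have hp : (0 : ℝ) < 2 ^ m := by positivity
  have h2 := hQ.trans h
  rw [pow_succ] at h2
  have e1 : (2 : ℝ) ^ m / 64 / (2 ^ m * 2) = 1 / 128 := by field_simp; norm_num
  have e2 : (2 : ℝ) ^ m / 128 * (1 / (2 ^ m * 2)) = 1 / 256 := by field_simp; norm_num
  rw [e1, e2] at h2
  rw [div_div, div_le_iff₀ (by positivity)]
  nlinarith

lemma aux_cube_pi (d : ℕ) : cubeMeasure d =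
    Measure.pi (fun _ : Fin d => volume.restrict (Set.Ico (0 : ℝ) 1)) := by
  unfold cubeMeasure unitCube
  rw [volume_pi, Measure.restrict_pi_pi]

lemma aux_coef {d : ℕ} (B : Finset (Fin d)) (K : ℕ) (j : Fin d → ℕ) :
    walshCoef (fun y => ∏ i ∈ B, dirichletKernel K (y i)) j =
      ∏ i, if i ∈ B then (if j i < K then (1 : ℝ) else 0) else (if j i = 0 then 1 else 0) := by
  unfold walshCoef
  have e : ∀ x : Fin d → ℝ, (∏ i ∈ B, dirichletKernel K (x i)) * ∏ i, walsh (j i) (x i) =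
      ∏ i, ((fun i u => (if i ∈ B then dirichletKernel K u else 1) * walsh (j i) u) :
        Fin d → ℝ → ℝ) i (x i) := by
    intro x
    simp only [Finset.prod_mul_distrib, Finset.prod_ite_mem, Finset.univ_inter]
  simp only [e]
  rw [aux_cube_pi, integral_fintype_prod_eq_prod
    (fun i u => (if i ∈ B then dirichletKernel K u else 1) * walsh (j i) u)]
  apply Finset.prod_congr rfl
  intro i _
  by_cases h : i ∈ B
  · simp only [h, if_true, dirichletKernel, Finset.sum_mul]
    rw [integral_finsetSum]
    · simp only [aux_orth]
      simp [Finset.sum_ite_eq']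
    · intro k _
      simp only [aux_walsh_xor]
      exact aux_walsh_int _ _
  · simp only [h, if_false]
    have := aux_orth 0 (j i)
    simp only [aux_walsh_zero] at this
    rw [this]
    simp [eq_comm]

lemma aux_partial {d : ℕ} (B : Finset (Fin d)) (K : ℕ) (N : Fin d → ℕ) (hN1 : ∀ i, 1 ≤ N i)
    (hNK : ∀ i, N i ≤ K) (x : Fin d → ℝ) :
    rectPartialSum (fun y => ∏ i ∈ B, dirichletKernel K (y i)) N x =
      ∏ i, if i ∈ B then dirichletKernel (N i) (x i) else 1 := by
  unfold rectPartialSum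
  simp only [aux_coef, ← Finset.prod_mul_distrib]
  rw [← Finset.prod_univ_sum (fun i => Finset.range (N i)) (fun i k =>
    (if i ∈ B then (if k < K then (1 : ℝ) else 0) else (if k = 0 then 1 else 0)) * walsh k (x i))]
  apply Finset.prod_congr rfl
  intro i _
  by_cases h : i ∈ B
  · simp only [h, if_true, dirichletKernel]
    apply Finset.sum_congr rfl
    intro k hk
    rw [if_pos ((Finset.mem_range.1 hk).trans_le (hNK i)), one_mul]
  · simp only [h, if_false]
    rw [Finset.sum_eq_single 0]
    · simp [aux_walsh_zero]
    · intro k _ hk; simp [hk]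
    · intro h0
      have := hN1 i
      simp at h0; omega

lemma aux_Icc_Ico (n : ℕ) : Finset.Icc 1 (pIdx n - 1) = Finset.Ico 1 (pIdx n) := by
  have hp := aux_pIdx n
  have h4 : 0 < 4 ^ n := by positivity
  ext i; simp only [Finset.mem_Icc, Finset.mem_Ico]; omega

lemma aux_mean {d : ℕ} (B : Finset (Fin d)) (n : ℕ) (hn : 1 ≤ n) (x : Fin d → ℝ) :
    mixedLogMean B (fun y => ∏ i ∈ B, dirichletKernel (2 ^ (2 * n + 1)) (y i))
      (fun _ => pIdx n) x = ∏ i ∈ B, FKernel (pIdx n) (x i) := by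
  have hp := aux_pIdx n
  have hpK : pIdx n ≤ 2 ^ (2 * n + 1) := by
    rw [pow_succ, pow_mul]; norm_num; omega
  have hl := (aux_logSum_p n hn).1
  unfold mixedLogMean
  have e : ∀ i ∈ Fintype.piFinset (fun _ : Fin d => Finset.Ico 1 (pIdx n)),
      rectPartialSum (fun y => ∏ i ∈ B, dirichletKernel (2 ^ (2 * n + 1)) (y i))
        (fun j => if j ∈ B then pIdx n - i j else i j) x / ∏ j, (i j : ℝ) =
      ∏ j, (if j ∈ B then dirichletKernel (pIdx n - i j) (x j) else 1) / (i j : ℝ) := by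
    intro i hi
    rw [Fintype.mem_piFinset] at hi
    have hi' := fun j => Finset.mem_Ico.1 (hi j)
    rw [aux_partial, Finset.prod_div_distrib]
    · congr 1
      apply Finset.prod_congr rfl
      intro j _
      split_ifs <;> rfl
    · intro j
      have := hi' j
      split_ifs <;> omega
    · intro j
      have := hi' j
      split_ifs <;> omega
  rw [Finset.sum_congr rfl e, ← Finset.prod_univ_sum (fun _ => Finset.Ico 1 (pIdx n))
    (fun j k => (if j ∈ B then dirichletKernel (pIdx n - k) (x j) else 1) / (k : ℝ)),
    ← Finset.prod_inv_distrib, ← Finset.prod_mul_distrib,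
    ← Finset.univ_inter B, ← Finset.prod_ite_mem]
  apply Finset.prod_congr rfl
  intro j _
  simp only [Finset.univ_inter]
  by_cases h : j ∈ B
  · simp only [h, if_true, FKernel, one_div]
  · simp only [h, if_false]
    have : logSum (pIdx n) = ∑ k ∈ Finset.Ico 1 (pIdx n), (1 : ℝ) / k := by
      rw [← aux_Icc_Ico]; rfl
    rw [← this, inv_mul_cancel₀ (by linarith)]

lemma aux_m0 : 2 ≤ m₀ := by
  have hne : {m : ℕ | 1 < mTilde m}.Nonempty := by
    have ht := tendsto_atTop.1 Real.tendsto_sum_range_one_div_nat_succ_atTop (16 * (2 ^ 15 + 2))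
    obtain ⟨N, hN⟩ := ht.exists
    refine ⟨2 * (N + 2), ?_⟩
    simp only [Set.mem_ofPred_eq, mTilde]
    rw [Int.lt_iff_add_one_le, Int.le_floor]
    have e : logSum (N + 1) = ∑ i ∈ Finset.range N, (1 : ℝ) / (i + 1) := by
      rw [aux_logSum_harm, Nat.add_sub_cancel, harmonic]
      push_cast
      simp
    have hle : logSum (N + 1) ≤ logSum (pIdx (2 * (N + 2) / 2) - 1) := by
      unfold logSum
      apply Finset.sum_le_sum_of_subset_of_nonneg
      · apply Finset.Icc_subset_Icc le_rfl
        have hp := aux_pIdx (N + 2)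
        have h4 : N + 2 < 4 ^ (N + 2) := Nat.lt_pow_self (by norm_num)
        rw [show 2 * (N + 2) / 2 = N + 2 by omega]
        omega
      · intro i _ _; positivity
    push_cast
    linarith
  have hmem := Nat.sInf_mem hne
  by_contra hlt
  push Not at hlt
  have h0 : m₀ / 2 = 0 := by omega
  have h1 : 1 < mTilde m₀ := hmem
  unfold mTilde at h1
  rw [h0] at h1
  have : logSum (pIdx 0 - 1) = 0 := by simp [pIdx, logSum]
  rw [this, Int.lt_iff_add_one_le, Int.le_floor] at h1
  norm_num at h1

/-- exponents -/
def auxM {d : ℕ} (B : Finset (Fin d)) (j₀ : Fin d) (n : ℕ) (a : Fin d → ℕ) (j : Fin d) : ℕ :=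
  if j = j₀ then n + ∑ i ∈ B.erase j₀, a i else 2 * n - a j

/-- boxes -/
def auxBox {d : ℕ} (B : Finset (Fin d)) (j₀ : Fin d) (n : ℕ) (a : Fin d → ℕ) :
    Set (Fin d → ℝ) :=
  Set.univ.pi fun j => if j ∈ B then auxE n (auxM B j₀ n a j) else Set.Ico 0 1

/-- index tuples -/
def auxIdx {d : ℕ} (B : Finset (Fin d)) (j₀ : Fin d) (n : ℕ) : Finset (Fin d → ℕ) :=
  Fintype.piFinset fun j => if j ∈ B.erase j₀ then Finset.range (n / B.card + 1) else {0}

lemma aux_ring_disj (m m' : ℕ) (h : m ≠ m') (x : ℝ) (h1 : x ∈ auxRing m) (h2 : x ∈ auxRing m') :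
    False := by
  have key : ∀ a b : ℕ, a < b → x ∈ auxRing a → x ∈ auxRing b → False := by
    intro a b hab ha hb
    have h3 := ha.1
    have h4 := hb.2
    have e : (2 : ℝ) / 2 ^ (b + 1) = 1 / 2 ^ b := by rw [pow_succ]; field_simp
    rw [e] at h4
    have h5 : (1 : ℝ) / 2 ^ b ≤ 1 / 2 ^ (a + 1) :=
      one_div_le_one_div_of_le (by positivity) (pow_le_pow_right₀ (by norm_num) hab)
    linarith
  rcases Nat.lt_or_gt_of_ne h with h | h
  · exact key _ _ h h1 h2
  · exact key _ _ h h2 h1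

lemma aux_ring_sub (m : ℕ) : auxRing m ⊆ Set.Ico 0 1 := by
  intro x hx
  refine ⟨le_trans (by positivity) hx.1, hx.2.trans_le ?_⟩
  rw [div_le_one (by positivity), pow_succ]
  have : (1 : ℝ) ≤ 2 ^ m := one_le_pow₀ (by norm_num)
  linarith

section
variable {d : ℕ} {B : Finset (Fin d)} {j₀ : Fin d} {n : ℕ} {a : Fin d → ℕ}

lemma aux_idx_le (ha : a ∈ auxIdx B j₀ n) (j : Fin d) : a j ≤ n / B.card := by
  unfold auxIdx at ha
  rw [Fintype.mem_piFinset] at ha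
  have := ha j
  split_ifs at this
  · have := Finset.mem_range.1 this; omega
  · rw [Finset.mem_singleton.1 this]; exact Nat.zero_le _

lemma aux_M_range (hj : j₀ ∈ B) (ha : a ∈ auxIdx B j₀ n) (j : Fin d) :
    n ≤ auxM B j₀ n a j ∧ auxM B j₀ n a j ≤ 2 * n := by
  unfold auxM
  split_ifs
  · have h1 : ∑ i ∈ B.erase j₀, a i ≤ (B.erase j₀).card • (n / B.card) :=
      Finset.sum_le_card_nsmul _ _ _ fun i _ => aux_idx_le ha i
    have h2 : (B.erase j₀).card ≤ B.card := Finset.card_le_card (Finset.erase_subset _ _)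
    have h3 : (B.erase j₀).card * (n / B.card) ≤ B.card * (n / B.card) :=
      Nat.mul_le_mul_right _ h2
    have h4 := Nat.mul_div_le n B.card
    rw [smul_eq_mul] at h1
    omega
  · have h1 := aux_idx_le ha j
    have h2 := Nat.div_le_self n B.card
    omega

lemma aux_M_sum (hj : j₀ ∈ B) (ha : a ∈ auxIdx B j₀ n) :
    ∑ j ∈ B, auxM B j₀ n a j = n * (2 * B.card - 1) := by
  rw [← Finset.add_sum_erase _ _ hj]
  have h1 : auxM B j₀ n a j₀ = n + ∑ i ∈ B.erase j₀, a i := by simp [auxM]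
  have h2 : ∑ j ∈ B.erase j₀, auxM B j₀ n a j + ∑ j ∈ B.erase j₀, a j =
      (B.erase j₀).card * (2 * n) := by
    rw [← Finset.sum_add_distrib, Finset.sum_congr rfl (g := fun _ => 2 * n)]
    · simp
    · intro j hj'
      have h3 := aux_idx_le ha j
      have h4 := Nat.div_le_self n B.card
      rw [auxM, if_neg (Finset.ne_of_mem_erase hj')]
      omega
  rw [Finset.card_erase_of_mem hj] at h2
  obtain ⟨b, hb⟩ : ∃ b, B.card = b + 1 :=
    ⟨B.card - 1, by have := Finset.card_pos.2 ⟨j₀, hj⟩; omega⟩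
  rw [h1]
  rw [hb] at h2 ⊢
  have : n * (2 * (b + 1) - 1) = n + b * (2 * n) := by
    rw [show 2 * (b + 1) - 1 = 2 * b + 1 by omega]; ring
  rw [this]
  simp only [Nat.add_sub_cancel] at h2
  omega

lemma aux_box_meas : MeasurableSet (auxBox B j₀ n a) := by
  apply MeasurableSet.univ_pi
  intro j
  split_ifs
  · exact aux_E_meas _ _
  · exact measurableSet_Ico

lemma aux_box_sub : auxBox B j₀ n a ⊆ unitCube d := by
  apply Set.pi_mono
  intro j _
  split_ifs
  · exact Set.inter_subset_left.trans (aux_ring_sub _)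
  · exact le_rfl

lemma aux_box_vol (hn : 2 ≤ n) (hj : j₀ ∈ B) (ha : a ∈ auxIdx B j₀ n) :
    1 / 512 ^ B.card / 2 ^ (n * (2 * B.card - 1)) ≤ (cubeMeasure d).real (auxBox B j₀ n a) := by
  have h1 : (cubeMeasure d).real (auxBox B j₀ n a) =
      ∏ j ∈ B, volume.real (auxE n (auxM B j₀ n a j)) := by
    unfold Measure.real cubeMeasure
    rw [Measure.restrict_apply aux_box_meas, Set.inter_eq_left.2 aux_box_sub]
    unfold auxBox
    rw [volume_pi_pi, ENNReal.toReal_prod, ← Finset.univ_inter B, ← Finset.prod_ite_mem]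
    apply Finset.prod_congr rfl
    intro j _
    simp only [Finset.univ_inter]
    split_ifs
    · rfl
    · simp
  rw [h1, ← aux_M_sum hj ha, ← Finset.prod_pow_eq_pow_sum]
  calc _ = ∏ j ∈ B, ((1 : ℝ) / 2 ^ auxM B j₀ n a j / 512) := by
        rw [Finset.prod_div_distrib, Finset.prod_div_distrib]
        simp only [Finset.prod_const, one_pow]
        ring
    _ ≤ _ := by
        apply Finset.prod_le_prod
        · intro j _; positivity
        · intro j _
          obtain ⟨h2, h3⟩ := aux_M_range hj ha j
          exact aux_E_vol n _ hn h2 h3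

lemma aux_box_large (hj : j₀ ∈ B) (ha : a ∈ auxIdx B j₀ n) (x : Fin d → ℝ)
    (hx : x ∈ auxBox B j₀ n a) :
    1 / 128 ^ B.card * 2 ^ (n * (2 * B.card - 1)) ≤ |∏ i ∈ B, FKernel (pIdx n) (x i)| := by
  rw [← aux_M_sum hj ha, ← Finset.prod_pow_eq_pow_sum, Finset.abs_prod]
  calc _ = ∏ j ∈ B, ((2 : ℝ) ^ auxM B j₀ n a j / 128) := by
        rw [Finset.prod_div_distrib]
        simp only [Finset.prod_const]
        ring
    _ ≤ _ := by
        apply Finset.prod_le_prod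
        · intro j _; positivity
        · intro j hjB
          have := hx j (Set.mem_univ j)
          simp only [hjB, if_true] at this
          exact this.2

lemma aux_box_disj : Set.PairwiseDisjoint (auxIdx B j₀ n : Set (Fin d → ℕ)) (auxBox B j₀ n) := by
  intro a ha a' ha' hne
  rw [Function.onFun, Set.disjoint_left]
  intro x hx hx'
  obtain ⟨j, hj⟩ := Function.ne_iff.1 hne
  have e1 := Fintype.mem_piFinset.1 ha j
  have e2 := Fintype.mem_piFinset.1 ha' j
  by_cases hB : j ∈ B.erase j₀
  · have hjB := Finset.mem_of_mem_erase hB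
    have g1 := hx j (Set.mem_univ j)
    have g2 := hx' j (Set.mem_univ j)
    simp only [hjB, if_true] at g1 g2
    refine aux_ring_disj _ _ ?_ (x j) g1.1 g2.1
    have h1 := aux_idx_le ha j
    have h2 := aux_idx_le ha' j
    have h4 := Nat.div_le_self n B.card
    simp only [auxM, if_neg (Finset.ne_of_mem_erase hB)]
    omega
  · simp only [hB, if_false, Finset.mem_singleton] at e1 e2
    omega

lemma aux_idx_card (hj : j₀ ∈ B) :
    (auxIdx B j₀ n).card = (n / B.card + 1) ^ (B.card - 1) := by
  unfold auxIdx
  rw [Fintype.card_piFinset]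
  have : ∀ j, (if j ∈ B.erase j₀ then Finset.range (n / B.card + 1) else {0}).card =
      if j ∈ B.erase j₀ then n / B.card + 1 else 1 := by
    intro j; split_ifs <;> simp
  simp only [this]
  rw [Finset.prod_ite_mem, Finset.univ_inter, Finset.prod_const, Finset.card_erase_of_mem hj]

end

/-- measure lower bound: for `|B| > 1`, the set where the mixed logarithmic
mean of `⊗_{i∈B} D_{2^{2n+1}}` exceeds `c₁·2^{n(2|B|-1)}` has measure at least
`c₂·n^{|B|-1}/2^{n(2|B|-1)}`. -/
theorem stmt16 (d : ℕ) (hd : 1 ≤ d) (B : Finset (Fin d)) (hB : 1 < B.card) :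
    ∃ c₁ > (0:ℝ), ∃ c₂ > (0:ℝ), ∀ n : ℕ, m₀ ≤ n →
      c₂ * (n : ℝ) ^ (B.card - 1) / 2 ^ (n * (2 * B.card - 1)) ≤
        ((cubeMeasure d) {x | c₁ * 2 ^ (n * (2 * B.card - 1)) ≤
          |mixedLogMean B (fun y => ∏ i ∈ B, dirichletKernel (2 ^ (2 * n + 1)) (y i))
            (fun _ => pIdx n) x|}).toReal := by
  have hb : (0 : ℝ) < B.card := by exact_mod_cast (by omega : 0 < B.card)
  refine ⟨1 / 128 ^ B.card, by positivity,
    1 / 512 ^ B.card * (1 / (B.card : ℝ) ^ (B.card - 1)), by positivity, ?_⟩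
  intro n hn
  have hn2 : 2 ≤ n := aux_m0.trans hn
  obtain ⟨j₀, hj⟩ : B.Nonempty := Finset.card_pos.1 (by omega)
  simp only [aux_mean B n (by omega)]
  have hfin : IsFiniteMeasure (cubeMeasure d) := by
    rw [aux_cube_pi]; infer_instance
  have hsub : (⋃ a ∈ auxIdx B j₀ n, auxBox B j₀ n a) ⊆
      {x | 1 / 128 ^ B.card * 2 ^ (n * (2 * B.card - 1)) ≤ |∏ i ∈ B, FKernel (pIdx n) (x i)|} := by
    intro x hx
    simp only [Set.mem_iUnion] at hx
    obtain ⟨a, ha, hx⟩ := hx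
    exact aux_box_large hj ha x hx
  refine le_trans ?_ (measureReal_mono (μ := cubeMeasure d) hsub)
  rw [measureReal_biUnion_finset aux_box_disj (fun a _ => aux_box_meas)]
  refine le_trans ?_ (Finset.card_nsmul_le_sum _ _ _ fun a ha => aux_box_vol hn2 hj ha)
  rw [aux_idx_card hj, nsmul_eq_mul]
  have hdiv : (n : ℝ) / B.card ≤ ((n / B.card + 1 : ℕ) : ℝ) := by
    rw [div_le_iff₀ hb]
    have := Nat.lt_div_mul_add (a := n) (b := B.card) (by omega)
    have h3 : n ≤ (n / B.card + 1) * B.card := by rw [add_mul]; omega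
    exact_mod_cast h3
  have hpow : ((n : ℝ) / B.card) ^ (B.card - 1) ≤
      (((n / B.card + 1) ^ (B.card - 1) : ℕ) : ℝ) := by
    rw [Nat.cast_pow]
    exact pow_le_pow_left₀ (by positivity) hdiv _
  calc _ = ((n : ℝ) / B.card) ^ (B.card - 1) *
        (1 / 512 ^ B.card / 2 ^ (n * (2 * B.card - 1))) := by
        rw [div_pow]; ring
    _ ≤ _ := by gcongr

end
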